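/- arXiv:2008.00755 — 3 statements merged into one kernel-verified Lean document; each statement's English description precedes it below -/
import Mathlib

section
/- Let G be a one-sided group shift on a finite group Γ and let N be a closed σ-stable normal subgroup of G (so N is itself a one-sided group shift on Γ, and the quotient G/N with the quotient topology and induced endomorphism is an expansive profinite group). Then ld(N) divides ld(G); moreover, for every finite group H and every injective continuous σ-equivariant group homomorphism ψ : G/N → H^ℕ, the one-sided group shift ψ(G/N) on H satisfies ld(ψ(G/N)) = ld(G)/ld(N). -/
open Function Set Filter

/-- The one-sided shift map on sequences. -/
def oneShift {A : Type*} (a : ℕ → A) : ℕ → A := fun n => a (n + 1)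

/-- The shift map on the full one-sided group shift `Γ^ℕ`, as a group homomorphism. -/
def shiftHom (Γ : Type*) [Group Γ] : (ℕ → Γ) →* (ℕ → Γ) where
  toFun a := fun n => a (n + 1)
  map_one' := rfl
  map_mul' _ _ := rfl

/-- `blocks G m` is the set of blocks of length `m` occurring in elements of `G`. -/
def blocks {Γ : Type*} [Group Γ] (G : Subgroup (ℕ → Γ)) (m : ℕ) : Set (Fin m → Γ) :=
  (fun g : ℕ → Γ => fun k : Fin m => g k) '' (G : Set (ℕ → Γ))

/-- `kerCard G i` is the cardinality of the kernel of the truncation map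
`π_i : G[i] → G[i-1]`. -/
noncomputable def kerCard {Γ : Type*} [Group Γ] (G : Subgroup (ℕ → Γ)) (i : ℕ) : ℕ :=
  Nat.card {b : Fin (i + 1) → Γ |
    b ∈ blocks G (i + 1) ∧ ∀ k : Fin (i + 1), (k : ℕ) < i → b k = 1}

/-!
Let `c_X(n)` be the number of blocks of length `n` of a group shift `X`. Since `c_X(n + 1) / c_X(n)`
is `|ker π_n|`, the count `c_X(n)` grows like `ld(X) ^ n`. Let `φ : G → H^ℕ` be continuous and
equivariant with kernel `N` and image `R`. By compactness, a block of `φ x` of length `n` is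
determined by a block of `x` whose length exceeds `n` by a constant, so
`c_N(n + l) * c_R(n) ≤ c_G(n + l)`. Conversely, `N` is of finite type: a sequence whose short
windows are blocks of `N` agrees with an element of `N` on a long prefix. Combined with compactness
this shows that if `φ x` starts with `n + m` trivial entries, then `x` agrees with an element of `N`
on the first `n` entries, so `c_G(n) ≤ c_N(n) * c_R(n + m)`. Comparing growth rates gives
`ld(G) = ld(N) * ld(R)`.
-/

open Asymptotics

theorem oneShift_iterate_apply {A : Type*} (a : ℕ → A) (k n : ℕ) :
    oneShift^[k] a n = a (n + k) := by
  induction k generalizing a with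
  | zero => rfl
  | succ k ih => rw [iterate_succ_apply, ih, oneShift, add_assoc]

section PrefixKernel

variable {Γ : Type*} [Group Γ]

variable (Γ) in
/-- The kernel of the truncation `Γ^ℕ → Γ^n` to the first `n` entries. These subgroups form a
neighbourhood basis of the identity when `Γ` is discrete. -/
def prefixKernel (n : ℕ) : Subgroup (ℕ → Γ) :=
  Subgroup.pi (Iio n) fun _ => ⊥

theorem mem_prefixKernel {n : ℕ} {g : ℕ → Γ} : g ∈ prefixKernel Γ n ↔ ∀ k < n, g k = 1 :=
  Iff.rfl

theorem inv_mul_mem_prefixKernel {n : ℕ} {g h : ℕ → Γ} :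
    g⁻¹ * h ∈ prefixKernel Γ n ↔ EqOn h g (Iio n) :=
  forall₂_congr fun _ _ => inv_mul_eq_one.trans eq_comm

instance prefixKernel_normal (n : ℕ) : (prefixKernel Γ n).Normal where
  conj_mem g hg x k hk := by
    rw [mem_prefixKernel] at hg
    simp [hg k hk]

theorem prefixKernel_antitone : Antitone (prefixKernel Γ) :=
  fun _ _ hmn _ hg k hk => hg k (lt_of_lt_of_le hk hmn)

theorem prefixKernel_zero : prefixKernel Γ 0 = ⊤ := by
  ext g
  simp [mem_prefixKernel]

theorem prefixKernel_succ (n : ℕ) :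
    prefixKernel Γ (n + 1) = (Pi.evalMonoidHom (fun _ : ℕ => Γ) n).ker ⊓ prefixKernel Γ n := by
  ext g
  simp only [mem_prefixKernel, Subgroup.mem_inf, MonoidHom.mem_ker, Pi.evalMonoidHom_apply,
    Nat.forall_lt_succ_right, and_comm]

theorem iInf_prefixKernel : ⨅ n, prefixKernel Γ n = ⊥ := by
  refine (Subgroup.eq_bot_iff_forall _).2 fun g hg => funext fun k => ?_
  exact Subgroup.mem_iInf.1 hg (k + 1) k k.lt_succ_self

theorem oneShift_iterate_mem_prefixKernel {n k : ℕ} {g : ℕ → Γ} (hg : g ∈ prefixKernel Γ (n + k)) :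
    oneShift^[k] g ∈ prefixKernel Γ n := fun j hj => by
  rw [oneShift_iterate_apply]
  exact hg (j + k) (Nat.add_lt_add_right hj k)

theorem mem_sup_subgroupOf_prefixKernel {G : Subgroup (ℕ → Γ)} {M : Subgroup G} {n : ℕ} {x : G} :
    x ∈ M ⊔ (prefixKernel Γ n).subgroupOf G ↔
      ∃ y ∈ M.map G.subtype, EqOn (x : ℕ → Γ) y (Iio n) := by
  rw [Subgroup.mem_sup_of_normal_right]
  constructor
  · rintro ⟨y, hy, z, hz, rfl⟩
    refine ⟨y, Subgroup.mem_map_of_mem _ hy, inv_mul_mem_prefixKernel.1 ?_⟩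
    rwa [Subgroup.coe_mul, inv_mul_cancel_left]
  · rintro ⟨_, ⟨y, hy, rfl⟩, hxy⟩
    exact ⟨y, hy, y⁻¹ * x, inv_mul_mem_prefixKernel.2 hxy, mul_inv_cancel_left y x⟩

variable [TopologicalSpace Γ]

theorem isOpen_prefixKernel [DiscreteTopology Γ] (n : ℕ) :
    IsOpen (prefixKernel Γ n : Set (ℕ → Γ)) :=
  isOpen_set_pi (finite_Iio n) fun _ _ => isOpen_discrete _

theorem isClosed_prefixKernel [T1Space Γ] (n : ℕ) : IsClosed (prefixKernel Γ n : Set (ℕ → Γ)) :=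
  isClosed_set_pi fun _ _ => isClosed_singleton

theorem exists_comap_prefixKernel_le [T1Space Γ] {X : Type*} [Group X] [TopologicalSpace X]
    [CompactSpace X] {f : X →* (ℕ → Γ)} (hf : Continuous f) {U : Subgroup X}
    (hU : IsOpen (U : Set X)) (hker : f.ker ≤ U) : ∃ n, (prefixKernel Γ n).comap f ≤ U := by
  have hclosed (n : ℕ) : IsClosed ((prefixKernel Γ n).comap f : Set X) :=
    (isClosed_prefixKernel n).preimage hf
  refine exists_subset_nhds_of_compactSpace
    (directed_of_isDirected_le fun _ _ hmn => Subgroup.comap_mono (prefixKernel_antitone hmn))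
    hclosed fun x hx => hU.mem_nhds (hker ?_)
  rw [MonoidHom.mem_ker, ← Subgroup.mem_bot, ← iInf_prefixKernel]
  exact Subgroup.mem_iInf.2 fun n => mem_iInter.1 hx n

end PrefixKernel

section LeadingEntries

variable {Γ : Type*} [Group Γ] {G N : Subgroup (ℕ → Γ)}

/-- The group of `i`-th entries of those elements of `G` whose earlier entries are trivial,
a copy of the kernel of `π_i : G[i] → G[i-1]` inside `Γ`. -/
def leadingEntries (G : Subgroup (ℕ → Γ)) (i : ℕ) : Subgroup Γ :=
  (prefixKernel Γ i ⊓ G).map (Pi.evalMonoidHom (fun _ : ℕ => Γ) i)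

theorem mem_leadingEntries {i : ℕ} {a : Γ} :
    a ∈ leadingEntries G i ↔ ∃ g ∈ G, g ∈ prefixKernel Γ i ∧ g i = a := by
  simp only [leadingEntries, Subgroup.mem_map, Subgroup.mem_inf, Pi.evalMonoidHom_apply,
    and_comm (a := _ ∈ prefixKernel Γ i) (b := _ ∈ G), and_assoc]

theorem kerCard_eq_card_leadingEntries (G : Subgroup (ℕ → Γ)) (i : ℕ) :
    kerCard G i = Nat.card (leadingEntries G i) := by
  have hinj : InjOn (fun b : Fin (i + 1) → Γ => b (Fin.last i))
      {b | b ∈ blocks G (i + 1) ∧ ∀ k : Fin (i + 1), (k : ℕ) < i → b k = 1} := by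
    rintro b ⟨-, hb⟩ c ⟨-, hc⟩ hlast
    funext k
    rcases k.le_last.eq_or_lt with rfl | hk
    · exact hlast
    · exact (hb k hk).trans (hc k hk).symm
  rw [kerCard, ← Nat.card_image_of_injOn hinj]
  congr 2
  ext a
  rw [SetLike.mem_coe, mem_leadingEntries]
  constructor
  · rintro ⟨_, ⟨⟨g, hg, rfl⟩, hone⟩, rfl⟩
    exact ⟨g, hg, fun k hk => hone ⟨k, Nat.lt_succ_of_lt hk⟩ hk, rfl⟩
  · rintro ⟨g, hg, hone, rfl⟩
    exact ⟨_, ⟨⟨g, hg, rfl⟩, fun k hk => hone k hk⟩, rfl⟩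

theorem leadingEntries_mono (hNG : N ≤ G) (i : ℕ) : leadingEntries N i ≤ leadingEntries G i :=
  Subgroup.map_mono (inf_le_inf_left _ hNG)

theorem kerCard_dvd_of_le (hNG : N ≤ G) (i : ℕ) : kerCard N i ∣ kerCard G i := by
  simp only [kerCard_eq_card_leadingEntries]
  exact Subgroup.card_dvd_of_le (leadingEntries_mono hNG i)

theorem leadingEntries_antitone (hGσ : MapsTo oneShift (G : Set (ℕ → Γ)) G) :
    Antitone (leadingEntries G) := by
  refine antitone_nat_of_succ_le fun i a ha => ?_
  obtain ⟨g, hg, hone, rfl⟩ := mem_leadingEntries.1 ha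
  exact mem_leadingEntries.2
    ⟨oneShift g, hGσ hg, oneShift_iterate_mem_prefixKernel (k := 1) hone, rfl⟩

theorem exists_mem_eqOn_Iio_succ {s n : ℕ} (hNσ : MapsTo oneShift (N : Set (ℕ → Γ)) N)
    (hs : leadingEntries N s ≤ leadingEntries N (s + n)) {x y z : ℕ → Γ}
    (hy : y ∈ N) (hxy : EqOn x y (Iio (s + n)))
    (hz : z ∈ N) (hxz : EqOn (oneShift^[n] x) z (Iio (s + 1))) :
    ∃ w ∈ N, EqOn x w (Iio (s + n + 1)) := by
  have hshift : EqOn z (oneShift^[n] y) (Iio s) := fun k hk => by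
    rw [← hxz (Nat.lt_succ_of_lt hk), oneShift_iterate_apply, oneShift_iterate_apply]
    exact hxy (Nat.add_lt_add_right hk n)
  -- The mismatch of `y` with `x` at `s + n` is a leading entry of `N` at `s`, hence also at
  -- `s + n`, where it can be repaired without disturbing the earlier entries.
  have hcorrection : (y (s + n))⁻¹ * x (s + n) ∈ leadingEntries N s :=
    mem_leadingEntries.2 ⟨(oneShift^[n] y)⁻¹ * z, mul_mem (inv_mem (hNσ.iterate n hy)) hz,
      inv_mul_mem_prefixKernel.2 hshift, by
        rw [Pi.mul_apply, Pi.inv_apply, ← hxz (mem_Iio.2 s.lt_succ_self), oneShift_iterate_apply,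
          oneShift_iterate_apply]⟩
  obtain ⟨u, hu, hone, hu_eq⟩ := mem_leadingEntries.1 (hs hcorrection)
  refine ⟨y * u, mul_mem hy hu, fun k hk => ?_⟩
  rcases (Nat.le_of_lt_succ hk).eq_or_lt with rfl | hlt
  · rw [Pi.mul_apply, hu_eq, mul_inv_cancel_left]
  · rw [Pi.mul_apply, hone k hlt, mul_one, hxy hlt]

theorem exists_mem_eqOn_of_windows {s : ℕ} (hNσ : MapsTo oneShift (N : Set (ℕ → Γ)) N)
    (hs : ∀ i ≥ s, leadingEntries N s ≤ leadingEntries N i) {x : ℕ → Γ} (n : ℕ)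
    (hx : ∀ k ≤ n, ∃ y ∈ N, EqOn (oneShift^[k] x) y (Iio (s + 1))) :
    ∃ y ∈ N, EqOn x y (Iio (s + n + 1)) := by
  induction n with
  | zero => exact hx 0 le_rfl
  | succ n ih =>
    obtain ⟨y, hy, hxy⟩ := ih fun k hk => hx k (Nat.le_succ_of_le hk)
    obtain ⟨z, hz, hxz⟩ := hx (n + 1) le_rfl
    exact exists_mem_eqOn_Iio_succ hNσ (hs _ (Nat.le_add_right s _)) hy hxy hz hxz

variable [TopologicalSpace Γ] [DiscreteTopology Γ]

theorem finite_leadingEntries (hG : IsCompact (G : Set (ℕ → Γ))) (i : ℕ) :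
    Finite (leadingEntries G i) := by
  have hfin : ((fun g : ℕ → Γ => g i) '' G).Finite :=
    (hG.image (continuous_apply i)).finite_of_discrete
  refine hfin.subset fun a ha => ?_
  obtain ⟨g, hg, -, rfl⟩ := mem_leadingEntries.1 ha
  exact mem_image_of_mem _ hg

theorem kerCard_pos (hG : IsCompact (G : Set (ℕ → Γ))) (i : ℕ) : 0 < kerCard G i := by
  have := finite_leadingEntries hG i
  rw [kerCard_eq_card_leadingEntries]
  exact Nat.card_pos

theorem kerCard_antitone (hG : IsCompact (G : Set (ℕ → Γ)))
    (hGσ : MapsTo oneShift (G : Set (ℕ → Γ)) G) : Antitone (kerCard G) := fun i j hij => by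
  have := finite_leadingEntries hG i
  simp only [kerCard_eq_card_leadingEntries]
  exact Subgroup.card_le_of_le (leadingEntries_antitone hGσ hij)

end LeadingEntries

section BlockCount

variable {Γ : Type*} [Group Γ] {G : Subgroup (ℕ → Γ)}

/-- The number of blocks of length `n` occurring in `G`, that is `|G[n-1]|`, expressed as the index
in `G` of the elements whose first `n` entries are trivial. -/
noncomputable def blockCount (G : Subgroup (ℕ → Γ)) (n : ℕ) : ℕ :=
  (prefixKernel Γ n).relIndex G

theorem blockCount_zero (G : Subgroup (ℕ → Γ)) : blockCount G 0 = 1 := by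
  rw [blockCount, prefixKernel_zero, Subgroup.relIndex_top_left]

theorem blockCount_succ (G : Subgroup (ℕ → Γ)) (n : ℕ) :
    blockCount G (n + 1) = kerCard G n * blockCount G n := by
  rw [blockCount, prefixKernel_succ, ← Subgroup.relIndex_inf_mul_relIndex, Subgroup.relIndex_ker,
    kerCard_eq_card_leadingEntries, leadingEntries, blockCount]

theorem blockCount_pos [TopologicalSpace Γ] [DiscreteTopology Γ]
    (hG : IsCompact (G : Set (ℕ → Γ))) (n : ℕ) : 0 < blockCount G n := by
  induction n with
  | zero => rw [blockCount_zero]; exact one_pos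
  | succ n ih => rw [blockCount_succ]; exact Nat.mul_pos (kerCard_pos hG n) ih

theorem blockCount_add {s d : ℕ} (hd : ∀ i ≥ s, kerCard G i = d) (t : ℕ) :
    blockCount G (s + t) = blockCount G s * d ^ t := by
  induction t with
  | zero => rw [add_zero, pow_zero, mul_one]
  | succ t ih => rw [← add_assoc, blockCount_succ, ih, hd _ (Nat.le_add_right s t), pow_succ]; ring

theorem index_comap_prefixKernel {X : Type*} [Group X] (f : X →* (ℕ → Γ)) (n : ℕ) :
    ((prefixKernel Γ n).comap f).index = blockCount f.range n :=
  Subgroup.index_comap _ _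

theorem blockCount_map_subtype_mul_index (M : Subgroup G) (n : ℕ) :
    blockCount (M.map G.subtype) n * (M ⊔ (prefixKernel Γ n).subgroupOf G).index =
      blockCount G n := by
  rw [blockCount, ← Subgroup.relIndex_comap, ← Subgroup.subgroupOf, ← Subgroup.relIndex_sup_right,
    Subgroup.relIndex_mul_index le_sup_right]
  rfl

end BlockCount

/-- `G` has limit degree `d`. A relation rather than a function, because the eventual value of
`i ↦ |ker π_i|` exists only under extra assumptions on `G`. -/
def HasLimitDegree {Γ : Type*} [Group Γ] (G : Subgroup (ℕ → Γ)) (d : ℕ) : Prop :=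
  ∀ᶠ i in atTop, kerCard G i = d

section LimitDegree

variable {Γ : Type*} [Group Γ] {G N : Subgroup (ℕ → Γ)} {d : ℕ}

theorem HasLimitDegree.dvd_of_le {dG dN : ℕ} (hdG : HasLimitDegree G dG)
    (hdN : HasLimitDegree N dN) (hNG : N ≤ G) : dN ∣ dG := by
  obtain ⟨i, rfl, rfl⟩ := (hdG.and hdN).exists
  exact kerCard_dvd_of_le hNG i

variable [TopologicalSpace Γ] [DiscreteTopology Γ]

theorem exists_hasLimitDegree (hG : IsCompact (G : Set (ℕ → Γ)))
    (hGσ : MapsTo oneShift (G : Set (ℕ → Γ)) G) : ∃ d, HasLimitDegree G d := by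
  have hlim := tendsto_atTop_ciInf (kerCard_antitone hG hGσ) (OrderBot.bddBelow _)
  rw [nhds_discrete, tendsto_pure] at hlim
  exact ⟨_, hlim⟩

theorem HasLimitDegree.pos (hd : HasLimitDegree G d) (hG : IsCompact (G : Set (ℕ → Γ))) :
    0 < d := by
  obtain ⟨i, rfl⟩ := hd.exists
  exact kerCard_pos hG i

theorem HasLimitDegree.exists_leadingEntries_le (hd : HasLimitDegree G d)
    (hG : IsCompact (G : Set (ℕ → Γ))) (hGσ : MapsTo oneShift (G : Set (ℕ → Γ)) G) :
    ∃ s, ∀ i ≥ s, leadingEntries G s ≤ leadingEntries G i := by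
  obtain ⟨s, hs⟩ := eventually_atTop.1 hd
  refine ⟨s, fun i hi => ?_⟩
  have := finite_leadingEntries hG s
  refine (Subgroup.eq_of_le_of_card_ge (leadingEntries_antitone hGσ hi) ?_).ge
  rw [← kerCard_eq_card_leadingEntries, ← kerCard_eq_card_leadingEntries, hs s le_rfl, hs i hi]

theorem HasLimitDegree.isTheta_blockCount (hd : HasLimitDegree G d)
    (hG : IsCompact (G : Set (ℕ → Γ))) :
    (fun n => (blockCount G n : ℝ)) =Θ[atTop] fun n => (d : ℝ) ^ n := by
  obtain ⟨s, hs⟩ := eventually_atTop.1 hd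
  have hd0 : (d : ℝ) ≠ 0 := mod_cast (hd.pos hG).ne'
  have hs0 : (blockCount G s : ℝ) ≠ 0 := mod_cast (blockCount_pos hG s).ne'
  have hgeom : (fun n => (blockCount G n : ℝ)) =ᶠ[atTop]
      fun n => blockCount G s / (d : ℝ) ^ s * (d : ℝ) ^ n := by
    filter_upwards [eventually_ge_atTop s] with n hn
    obtain ⟨t, rfl⟩ := Nat.exists_eq_add_of_le hn
    rw [blockCount_add hs, pow_add]
    push_cast
    field_simp
  exact hgeom.trans_isTheta <|
    (isTheta_refl _ _).const_mul_left (div_ne_zero hs0 (pow_ne_zero s hd0))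

theorem HasLimitDegree.isTheta_blockCount_add (hd : HasLimitDegree G d)
    (hG : IsCompact (G : Set (ℕ → Γ))) (m : ℕ) :
    (fun n => (blockCount G (n + m) : ℝ)) =Θ[atTop] fun n => (d : ℝ) ^ n := by
  have hd0 : (d : ℝ) ≠ 0 := mod_cast (hd.pos hG).ne'
  have hshift : Tendsto (fun n => n + m) atTop atTop := tendsto_add_atTop_nat m
  obtain ⟨hle, hge⟩ := hd.isTheta_blockCount hG
  calc (fun n => (blockCount G (n + m) : ℝ))
      =Θ[atTop] fun n => (d : ℝ) ^ (n + m) := ⟨hle.comp_tendsto hshift, hge.comp_tendsto hshift⟩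
    _ =Θ[atTop] fun n => (d : ℝ) ^ n := by
      simp only [pow_add, mul_comm _ ((d : ℝ) ^ m)]
      exact (isTheta_refl _ _).const_mul_left (pow_ne_zero m hd0)

end LimitDegree

theorem le_of_isBigO_pow {a b : ℝ} (hb : 0 ≤ b)
    (h : (fun n : ℕ => a ^ n) =O[atTop] fun n => b ^ n) : a ≤ b := by
  by_contra! hlt
  have ha (n : ℕ) : a ^ n ≠ 0 := pow_ne_zero n (hb.trans_lt hlt).ne'
  exact h.not_isLittleO (Frequently.of_forall ha) (isLittleO_pow_pow_of_lt_left hb hlt)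

section Equivariant

variable {Γ H : Type*} [Group Γ] [Group H] {G : Subgroup (ℕ → Γ)} {φ : G →* (ℕ → H)}

/-- `φ` commutes with the shift wherever the shift of an element of `G` lies in `G`. Phrased through
pairs of elements of `G`, so that no shift-stability proof enters the definition. -/
def IsShiftEquivariant (φ : G →* (ℕ → H)) : Prop :=
  ∀ x y : G, (y : ℕ → Γ) = oneShift (x : ℕ → Γ) → φ y = oneShift (φ x)

theorem IsShiftEquivariant.map_iterate (hφ : IsShiftEquivariant φ)
    (hGσ : MapsTo oneShift (G : Set (ℕ → Γ)) G) (k : ℕ) (x : G) :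
    φ ⟨oneShift^[k] x, hGσ.iterate k x.2⟩ = oneShift^[k] (φ x) := by
  induction k with
  | zero => rfl
  | succ k ih =>
    rw [iterate_succ_apply' oneShift k (φ x), ← ih]
    exact hφ _ _ (iterate_succ_apply' _ _ _)

theorem IsShiftEquivariant.mapsTo_range (hφ : IsShiftEquivariant φ)
    (hGσ : MapsTo oneShift (G : Set (ℕ → Γ)) G) :
    MapsTo oneShift (φ.range : Set (ℕ → H)) φ.range := by
  rintro _ ⟨x, rfl⟩
  exact ⟨⟨oneShift x, hGσ x.2⟩, hφ _ _ rfl⟩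

theorem IsShiftEquivariant.mapsTo_ker (hφ : IsShiftEquivariant φ)
    (hGσ : MapsTo oneShift (G : Set (ℕ → Γ)) G) :
    MapsTo oneShift (φ.ker.map G.subtype : Set (ℕ → Γ)) (φ.ker.map G.subtype) := by
  rintro _ ⟨x, hx, rfl⟩
  refine ⟨⟨oneShift x, hGσ x.2⟩, ?_, rfl⟩
  rw [SetLike.mem_coe, MonoidHom.mem_ker, hφ x _ rfl, MonoidHom.mem_ker.1 hx]
  rfl

variable [TopologicalSpace Γ] [TopologicalSpace H]

theorem isCompact_monoidHom_range (hG : IsCompact (G : Set (ℕ → Γ))) (hφc : Continuous φ) :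
    IsCompact (φ.range : Set (ℕ → H)) := by
  have := isCompact_iff_compactSpace.1 hG
  rw [MonoidHom.coe_range]
  exact isCompact_range hφc

theorem isCompact_map_subtype_ker [T1Space H] (hG : IsCompact (G : Set (ℕ → Γ)))
    (hφc : Continuous φ) : IsCompact (φ.ker.map G.subtype : Set (ℕ → Γ)) := by
  have := isCompact_iff_compactSpace.1 hG
  have hclosed : IsClosed (φ.ker : Set G) := isClosed_singleton.preimage hφc
  exact hclosed.isCompact.image continuous_subtype_val

variable [DiscreteTopology H]

theorem IsShiftEquivariant.exists_subgroupOf_prefixKernel_le [T1Space Γ] (hφ : IsShiftEquivariant φ)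
    (hG : IsCompact (G : Set (ℕ → Γ))) (hGσ : MapsTo oneShift (G : Set (ℕ → Γ)) G)
    (hφc : Continuous φ) :
    ∃ l, ∀ n, (prefixKernel Γ (n + l)).subgroupOf G ≤ (prefixKernel H n).comap φ := by
  have := isCompact_iff_compactSpace.1 hG
  have hopen : IsOpen ((prefixKernel H 1).comap φ : Set G) := (isOpen_prefixKernel 1).preimage hφc
  obtain ⟨l, hl⟩ := exists_comap_prefixKernel_le (f := G.subtype) continuous_subtype_val hopen
    (G.ker_subtype.trans_le bot_le)
  refine ⟨l, fun n x hx k hk => ?_⟩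
  have hshift : oneShift^[k] (x : ℕ → Γ) ∈ prefixKernel Γ l :=
    oneShift_iterate_mem_prefixKernel (prefixKernel_antitone (by grind) hx)
  have hzero := hl (x := ⟨oneShift^[k] x, hGσ.iterate k x.2⟩) hshift 0 (mem_Iio.2 one_pos)
  rwa [hφ.map_iterate hGσ, oneShift_iterate_apply, zero_add] at hzero

variable [DiscreteTopology Γ]

theorem IsShiftEquivariant.exists_comap_prefixKernel_le_ker_sup (hφ : IsShiftEquivariant φ)
    (hG : IsCompact (G : Set (ℕ → Γ))) (hGσ : MapsTo oneShift (G : Set (ℕ → Γ)) G)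
    (hφc : Continuous φ) :
    ∃ m, ∀ n, (prefixKernel H (n + m)).comap φ ≤ φ.ker ⊔ (prefixKernel Γ n).subgroupOf G := by
  have := isCompact_iff_compactSpace.1 hG
  have hNσ := hφ.mapsTo_ker hGσ
  have hN := isCompact_map_subtype_ker hG hφc
  obtain ⟨_, hd⟩ := exists_hasLimitDegree hN hNσ
  obtain ⟨s, hs⟩ := hd.exists_leadingEntries_le hN hNσ
  have hopen : IsOpen ((φ.ker ⊔ (prefixKernel Γ (s + 1)).subgroupOf G : Subgroup G) : Set G) :=
    Subgroup.isOpen_mono le_sup_right ((isOpen_prefixKernel _).preimage continuous_subtype_val)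
  obtain ⟨m, hm⟩ := exists_comap_prefixKernel_le hφc hopen le_sup_left
  refine ⟨m, fun n x hx => ?_⟩
  have hwindows (k : ℕ) (hk : k ≤ n) :
      ∃ y ∈ φ.ker.map G.subtype, EqOn (oneShift^[k] (x : ℕ → Γ)) y (Iio (s + 1)) := by
    refine mem_sup_subgroupOf_prefixKernel.1 (hm (x := ⟨oneShift^[k] x, hGσ.iterate k x.2⟩) ?_)
    rw [Subgroup.mem_comap, hφ.map_iterate hGσ]
    exact oneShift_iterate_mem_prefixKernel (prefixKernel_antitone (by grind) hx)
  obtain ⟨y, hy, hxy⟩ := exists_mem_eqOn_of_windows hNσ hs n hwindows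
  exact mem_sup_subgroupOf_prefixKernel.2 ⟨y, hy, hxy.mono (Iio_subset_Iio (by grind))⟩

theorem IsShiftEquivariant.exists_blockCount_mul_le (hφ : IsShiftEquivariant φ)
    (hG : IsCompact (G : Set (ℕ → Γ))) (hGσ : MapsTo oneShift (G : Set (ℕ → Γ)) G)
    (hφc : Continuous φ) :
    ∃ l, ∀ n, blockCount (φ.ker.map G.subtype) (n + l) * blockCount φ.range n ≤
      blockCount G (n + l) := by
  obtain ⟨l, hl⟩ := hφ.exists_subgroupOf_prefixKernel_le hG hGσ hφc
  refine ⟨l, fun n => Nat.le_of_dvd (blockCount_pos hG _) ?_⟩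
  rw [← blockCount_map_subtype_mul_index φ.ker, ← index_comap_prefixKernel]
  exact mul_dvd_mul_left _
    (Subgroup.index_dvd_of_le (sup_le (MonoidHom.ker_le_comap φ _) (hl n)))

theorem IsShiftEquivariant.exists_blockCount_le_mul (hφ : IsShiftEquivariant φ)
    (hG : IsCompact (G : Set (ℕ → Γ))) (hGσ : MapsTo oneShift (G : Set (ℕ → Γ)) G)
    (hφc : Continuous φ) :
    ∃ m, ∀ n, blockCount G n ≤
      blockCount (φ.ker.map G.subtype) n * blockCount φ.range (n + m) := by
  obtain ⟨m, hm⟩ := hφ.exists_comap_prefixKernel_le_ker_sup hG hGσ hφc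
  refine ⟨m, fun n => ?_⟩
  rw [← blockCount_map_subtype_mul_index φ.ker]
  refine Nat.mul_le_mul_left _
    (Nat.le_of_dvd (blockCount_pos (isCompact_monoidHom_range hG hφc) _) ?_)
  rw [← index_comap_prefixKernel]
  exact Subgroup.index_dvd_of_le (hm n)

theorem IsShiftEquivariant.limitDegree_eq_ker_mul_range (hφ : IsShiftEquivariant φ)
    (hG : IsCompact (G : Set (ℕ → Γ))) (hGσ : MapsTo oneShift (G : Set (ℕ → Γ)) G)
    (hφc : Continuous φ) {dG dN dR : ℕ} (hdG : HasLimitDegree G dG)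
    (hdN : HasLimitDegree (φ.ker.map G.subtype) dN) (hdR : HasLimitDegree φ.range dR) :
    dG = dN * dR := by
  have hN := isCompact_map_subtype_ker hG hφc
  have hR := isCompact_monoidHom_range hG hφc
  obtain ⟨l, hl⟩ := hφ.exists_blockCount_mul_le hG hGσ hφc
  obtain ⟨m, hm⟩ := hφ.exists_blockCount_le_mul hG hGσ hφc
  apply le_antisymm <;> refine Nat.cast_le.1 (le_of_isBigO_pow (Nat.cast_nonneg _) ?_) <;>
    simp only [Nat.cast_mul, mul_pow]
  · calc (fun n => (dG : ℝ) ^ n)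
        =Θ[atTop] fun n => (blockCount G n : ℝ) := (hdG.isTheta_blockCount hG).symm
      _ =O[atTop] fun n =>
          (blockCount (φ.ker.map G.subtype) n : ℝ) * blockCount φ.range (n + m) :=
        .of_norm_le fun n => mod_cast hm n
      _ =Θ[atTop] fun n => (dN : ℝ) ^ n * (dR : ℝ) ^ n :=
        (hdN.isTheta_blockCount hN).mul (hdR.isTheta_blockCount_add hR m)
  · calc (fun n => (dN : ℝ) ^ n * (dR : ℝ) ^ n)
        =Θ[atTop] fun n =>
          (blockCount (φ.ker.map G.subtype) (n + l) : ℝ) * blockCount φ.range n :=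
        ((hdN.isTheta_blockCount_add hN l).mul (hdR.isTheta_blockCount hR)).symm
      _ =O[atTop] fun n => (blockCount G (n + l) : ℝ) := .of_norm_le fun n => mod_cast hl n
      _ =Θ[atTop] fun n => (dG : ℝ) ^ n := hdG.isTheta_blockCount_add hG l

theorem IsShiftEquivariant.hasLimitDegree_range (hφ : IsShiftEquivariant φ)
    (hG : IsCompact (G : Set (ℕ → Γ))) (hGσ : MapsTo oneShift (G : Set (ℕ → Γ)) G)
    (hφc : Continuous φ) {dG dN : ℕ} (hdG : HasLimitDegree G dG)
    (hdN : HasLimitDegree (φ.ker.map G.subtype) dN) : HasLimitDegree φ.range (dG / dN) := by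
  obtain ⟨dR, hdR⟩ :=
    exists_hasLimitDegree (isCompact_monoidHom_range hG hφc) (hφ.mapsTo_range hGσ)
  rw [hφ.limitDegree_eq_ker_mul_range hG hGσ hφc hdG hdN hdR,
    Nat.mul_div_cancel_left _ (hdN.pos (isCompact_map_subtype_ker hG hφc))]
  exact hdR

end Equivariant

universe u v

theorem limitDegree_multiplicative_general
    {Γ : Type u} [Group Γ] [TopologicalSpace Γ] [DiscreteTopology Γ]
    {G N : Subgroup (ℕ → Γ)}
    (hGcompact : IsCompact (G : Set (ℕ → Γ))) (hGstable : ∀ g ∈ G, oneShift g ∈ G)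
    (hNG : N ≤ G) [hNnormal : (N.subgroupOf G).Normal] {dG dN : ℕ}
    (hdG : HasLimitDegree G dG) (hdN : HasLimitDegree N dN) :
    dN ∣ dG ∧
      ∀ (H : Type v) [Group H] [TopologicalSpace H] [DiscreteTopology H]
        (ψ : (G ⧸ N.subgroupOf G) →* (ℕ → H)),
        Function.Injective ψ → Continuous ψ →
        (∀ x y : G, (y : ℕ → Γ) = oneShift (x : ℕ → Γ) →
          ψ (QuotientGroup.mk y) = shiftHom H (ψ (QuotientGroup.mk x))) →
        HasLimitDegree ψ.range (dG / dN) := by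
  refine ⟨hdG.dvd_of_le hdN hNG, fun H _ _ _ ψ hinj hcont hequiv => ?_⟩
  let φ : G →* (ℕ → H) := ψ.comp (QuotientGroup.mk' (N.subgroupOf G))
  have hφ : IsShiftEquivariant φ := hequiv
  have hker : φ.ker.map G.subtype = N := by
    rw [MonoidHom.ker_comp_of_injective _ _ hinj, QuotientGroup.ker_mk',
      Subgroup.map_subgroupOf_eq_of_le hNG]
  have hrange : φ.range = ψ.range := by
    rw [MonoidHom.range_comp, QuotientGroup.range_mk', ← MonoidHom.range_eq_map]
  rw [← hker] at hdN
  rw [← hrange]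
  exact hφ.hasLimitDegree_range hGcompact hGstable (hcont.comp QuotientGroup.continuous_mk) hdG hdN

/-- Let `G` be a one-sided group shift on a finite group `Γ` and `N` a
closed shift-stable normal subgroup of `G`. Then `ld(N)` divides `ld(G)`, and for every
finite group `H` and every injective continuous σ-equivariant homomorphism
`ψ : G/N → H^ℕ`, the one-sided group shift `ψ(G/N)` on `H` has limit degree
`ld(G)/ld(N)`.  (Limit degrees are expressed via the eventual values of the sequences
`i ↦ |ker π_i|`.) -/
theorem limitDegree_multiplicative
    {Γ : Type*} [Group Γ] [Finite Γ] [TopologicalSpace Γ] [DiscreteTopology Γ]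
    (G N : Subgroup (ℕ → Γ))
    (hGclosed : IsClosed (G : Set (ℕ → Γ))) (hGstable : ∀ g ∈ G, oneShift g ∈ G)
    (hNclosed : IsClosed (N : Set (ℕ → Γ))) (hNstable : ∀ g ∈ N, oneShift g ∈ N)
    (hNG : N ≤ G) [hNnormal : (N.subgroupOf G).Normal] :
    ∀ dG dN : ℕ,
      (∀ᶠ i in atTop, kerCard G i = dG) → (∀ᶠ i in atTop, kerCard N i = dN) →
      dN ∣ dG ∧
      ∀ (H : Type) (_ : Group H) (_ : Finite H) (_ : TopologicalSpace H),
        DiscreteTopology H →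
        ∀ ψ : (G ⧸ N.subgroupOf G) →* (ℕ → H),
          Function.Injective ψ → Continuous ψ →
          (∀ x y : G, (y : ℕ → Γ) = oneShift (x : ℕ → Γ) →
            ψ (QuotientGroup.mk y) = shiftHom H (ψ (QuotientGroup.mk x))) →
          ∀ᶠ i in atTop, kerCard ψ.range i = dG / dN := by
  intro dG dN hdG hdN
  exact (limitDegree_multiplicative_general hGclosed.isCompact hGstable hNG hdG hdN).imp_right
    fun hquot H _ _ _ _ ψ => hquot H ψ
end

section
/- Let Γ be a finite simple group and G = Γ^ℕ the full one-sided group shift on Γ. If N is a proper closed σ-stable normal subgroup of G, then N is finite, and the quotient G/N (with the quotient topology and induced endomorphism) is isomorphic, as an expansive profinite group, to Γ^ℕ. -/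
open Function Set

/-!
Let `r` be the first index at which some element of `Γ` is not the value `a r` of an `a ∈ N` with
`a 0 = ⋯ = a (r - 1) = 1`. These leading values form a normal subgroup of `Γ` that decreases with
the index, so by simplicity they are everything before `r` and trivial from `r` on. Hence an element
of `N` is determined by its first `r` entries, which are arbitrary. Conjugating by a sequence
supported at `r` shows that the `r`-th entry is central, so `N` is the solution set of a recurrence
`a (n + r) = ρ (a n, …, a (n + r - 1))` with `ρ : Γ ^ r →* Γ` of central image. Centrality makes the
defect of this recurrence a shift-equivariant endomorphism of `Γ ^ ℕ` with kernel `N`, and solving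
the inhomogeneous recurrence gives a continuous section of it.
-/

theorem exists_quotient_mulEquiv_of_continuous_rightInverse {G H : Type*} [Group G]
    [TopologicalSpace G] [Group H] [TopologicalSpace H] {φ : G →* H} {s : H → G}
    {N : Subgroup G} [N.Normal] (hker : φ.ker = N) (hφ : Continuous φ) (hs : Continuous s)
    (hinv : RightInverse s φ) :
    ∃ e : G ⧸ N ≃* H, Continuous e ∧ Continuous e.symm ∧ ∀ g : G, e g = φ g := by
  subst hker
  exact ⟨QuotientGroup.quotientKerEquivOfRightInverse φ s hinv, hφ.quotient_lift _,
    QuotientGroup.continuous_mk.comp hs, fun _ => rfl⟩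

section Shift

variable {Γ : Type*} [Group Γ]

theorem iterate_shiftHom_apply (n : ℕ) (a : ℕ → Γ) (i : ℕ) :
    (shiftHom Γ)^[n] a i = a (i + n) := by
  induction n generalizing a with
  | zero => rfl
  | succ n ih => rw [iterate_succ_apply, ih]; rfl

theorem continuous_shiftHom [TopologicalSpace Γ] : Continuous (shiftHom Γ) :=
  continuous_pi fun n => continuous_apply (n + 1)

/-- The sliding block code with local rule `f`: its `n`-th entry applies `f` to the `n`-fold shift
of the argument. The rule `f` may read the whole sequence, not only a finite window. -/
def slidingBlockCode (f : (ℕ → Γ) →* Γ) : (ℕ → Γ) →* (ℕ → Γ) where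
  toFun a n := f ((shiftHom Γ)^[n] a)
  map_one' := funext fun n => by simp only [iterate_map_one, map_one, Pi.one_apply]
  map_mul' a b := funext fun n => by simp only [iterate_map_mul, map_mul, Pi.mul_apply]

theorem slidingBlockCode_apply (f : (ℕ → Γ) →* Γ) (a : ℕ → Γ) (n : ℕ) :
    slidingBlockCode f a n = f ((shiftHom Γ)^[n] a) :=
  rfl

theorem slidingBlockCode_shiftHom (f : (ℕ → Γ) →* Γ) (a : ℕ → Γ) :
    slidingBlockCode f (shiftHom Γ a) = shiftHom Γ (slidingBlockCode f a) :=
  rfl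

theorem continuous_slidingBlockCode [TopologicalSpace Γ] {f : (ℕ → Γ) →* Γ} (hf : Continuous f) :
    Continuous (slidingBlockCode f) :=
  continuous_pi fun n => hf.comp (continuous_shiftHom.iterate n)

theorem le_ker_slidingBlockCode {N : Subgroup (ℕ → Γ)} (hN : MapsTo (shiftHom Γ) N N)
    {f : (ℕ → Γ) →* Γ} (hf : N ≤ f.ker) : N ≤ (slidingBlockCode f).ker :=
  fun _ ha => funext fun n => hf (hN.iterate n ha)

end Shift

section InitialSegment

variable {Γ : Type*} [Group Γ]

/-- The homomorphism sending a sequence to its initial segment of length `r`. -/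
def takeHom (Γ : Type*) [Group Γ] (r : ℕ) : (ℕ → Γ) →* (Fin r → Γ) where
  toFun a i := a i
  map_one' := rfl
  map_mul' _ _ := rfl

theorem takeHom_apply (r : ℕ) (a : ℕ → Γ) (i : Fin r) : takeHom Γ r a i = a i :=
  rfl

theorem takeHom_eq_one_iff {r : ℕ} {a : ℕ → Γ} : takeHom Γ r a = 1 ↔ ∀ i < r, a i = 1 := by
  simp only [funext_iff, Fin.forall_iff, takeHom_apply, Pi.one_apply]

theorem continuous_takeHom [TopologicalSpace Γ] (r : ℕ) : Continuous (takeHom Γ r) :=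
  continuous_pi fun i => continuous_apply (i : ℕ)

theorem eq_top_of_forall_takeHom_surjective [TopologicalSpace Γ] {N : Subgroup (ℕ → Γ)}
    (hclosed : IsClosed (N : Set (ℕ → Γ)))
    (hsurj : ∀ r, Surjective ((takeHom Γ r).domRestrict N)) : N = ⊤ := by
  refine (Subgroup.eq_top_iff' N).mpr fun g => ?_
  choose u hu using fun r => hsurj r (takeHom Γ r g)
  have entry_eq : ∀ i r, i < r → (u r : ℕ → Γ) i = g i := fun i r hi => congrFun (hu r) ⟨i, hi⟩
  have tendsto_g : Filter.Tendsto (fun r => (u r : ℕ → Γ)) Filter.atTop (nhds g) :=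
    tendsto_pi_nhds.mpr fun i => tendsto_const_nhds.congr' <|
      (Filter.eventually_gt_atTop i).mono fun r hi => (entry_eq i r hi).symm
  exact hclosed.mem_of_tendsto tendsto_g (Filter.Eventually.of_forall fun r => (u r).2)

theorem apply_mem_center_of_takeHom_injective {N : Subgroup (ℕ → Γ)} [N.Normal] {r n : ℕ}
    (hinj : Injective ((takeHom Γ r).domRestrict N)) (hn : r ≤ n) {a : ℕ → Γ} (ha : a ∈ N) :
    a n ∈ Subgroup.center Γ := by
  refine Subgroup.mem_center_iff.mpr fun y => ?_
  let y_n : ℕ → Γ := Pi.mulSingle n y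
  have hconj : y_n * a * y_n⁻¹ ∈ N := Subgroup.Normal.conj_mem ‹_› a ha y_n
  have same_take : takeHom Γ r (y_n * a * y_n⁻¹) = takeHom Γ r a := by
    ext i
    have y_n_apply : y_n i = 1 :=
      Pi.mulSingle_eq_of_ne (M := fun _ => Γ) (i.2.trans_le hn).ne y
    simp [takeHom_apply, y_n_apply]
  have conj_eq : y_n * a * y_n⁻¹ = a :=
    congrArg Subtype.val (hinj (a₁ := ⟨_, hconj⟩) (a₂ := ⟨a, ha⟩) same_take)
  simpa [y_n, mul_inv_eq_iff_eq_mul] using congrFun conj_eq n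

end InitialSegment

section LeadingSubgroup

variable {Γ : Type*} [Group Γ]

/-- The values at `k` of the elements of `N` whose entries before `k` are trivial. -/
def leadingSubgroup (N : Subgroup (ℕ → Γ)) (k : ℕ) : Subgroup Γ :=
  (N ⊓ (takeHom Γ k).ker).map (Pi.evalMonoidHom _ k)

theorem mem_leadingSubgroup {N : Subgroup (ℕ → Γ)} {k : ℕ} {x : Γ} :
    x ∈ leadingSubgroup N k ↔ ∃ a ∈ N, takeHom Γ k a = 1 ∧ a k = x := by
  simp only [leadingSubgroup, Subgroup.mem_map, Subgroup.mem_inf, MonoidHom.mem_ker,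
    Pi.evalMonoidHom_apply, and_assoc]

instance leadingSubgroup_normal (N : Subgroup (ℕ → Γ)) [N.Normal] (k : ℕ) :
    (leadingSubgroup N k).Normal :=
  Subgroup.Normal.map inferInstance _ (surjective_eval k)

theorem leadingSubgroup_antitone {N : Subgroup (ℕ → Γ)} (hN : MapsTo (shiftHom Γ) N N) :
    Antitone (leadingSubgroup N) := by
  refine antitone_nat_of_succ_le fun k x hx => ?_
  obtain ⟨a, ha, ha_one, rfl⟩ := mem_leadingSubgroup.mp hx
  rw [takeHom_eq_one_iff] at ha_one
  exact mem_leadingSubgroup.mpr ⟨shiftHom Γ a, hN ha,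
    takeHom_eq_one_iff.mpr fun i hi => ha_one (i + 1) (Nat.succ_lt_succ hi), rfl⟩

theorem takeHom_surjective_of_leadingSubgroup_eq_top {N : Subgroup (ℕ → Γ)} {r : ℕ}
    (htop : ∀ k < r, leadingSubgroup N k = ⊤) : Surjective ((takeHom Γ r).domRestrict N) := by
  induction r with
  | zero => exact fun u => ⟨1, Subsingleton.elim _ _⟩
  | succ r ih =>
    intro u
    obtain ⟨a, ha⟩ := ih (fun k hk => htop k (hk.trans r.lt_succ_self)) (Fin.init u)
    have correction_mem : ((a : ℕ → Γ) r)⁻¹ * u (Fin.last r) ∈ leadingSubgroup N r :=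
      htop r r.lt_succ_self ▸ Subgroup.mem_top _
    obtain ⟨c, hc, hc_one, hc_r⟩ := mem_leadingSubgroup.mp correction_mem
    refine ⟨a * ⟨c, hc⟩, funext fun i => ?_⟩
    change (a : ℕ → Γ) i * c i = u i
    induction i using Fin.lastCases with
    | last => simp [hc_r]
    | cast i =>
      have a_apply : (a : ℕ → Γ) i = u i.castSucc := congrFun ha i
      simp [takeHom_eq_one_iff.mp hc_one i i.2, a_apply]

theorem takeHom_injective_of_leadingSubgroup_eq_bot {N : Subgroup (ℕ → Γ)} {r : ℕ}
    (hbot : ∀ k, r ≤ k → leadingSubgroup N k = ⊥) : Injective ((takeHom Γ r).domRestrict N) := by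
  refine (injective_iff_map_eq_one _).mpr fun ⟨a, ha⟩ ha_one => Subtype.ext <| funext fun k => ?_
  change a k = 1
  induction k using Nat.strong_induction_on with
  | _ k ih =>
    rcases lt_or_ge k r with hk | hk
    · exact takeHom_eq_one_iff.mp ha_one k hk
    · have : a k ∈ leadingSubgroup N k :=
        mem_leadingSubgroup.mpr ⟨a, ha, takeHom_eq_one_iff.mpr ih, rfl⟩
      rwa [hbot k hk, Subgroup.mem_bot] at this

theorem exists_takeHom_bijective [IsSimpleGroup Γ] [TopologicalSpace Γ] {N : Subgroup (ℕ → Γ)}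
    [N.Normal] (hproper : N ≠ ⊤) (hclosed : IsClosed (N : Set (ℕ → Γ)))
    (hN : MapsTo (shiftHom Γ) N N) : ∃ r, Bijective ((takeHom Γ r).domRestrict N) := by
  classical
  have exists_ne_top : ∃ k, leadingSubgroup N k ≠ ⊤ := by
    by_contra! htop
    exact hproper <| eq_top_of_forall_takeHom_surjective hclosed fun _ =>
      takeHom_surjective_of_leadingSubgroup_eq_top fun k _ => htop k
  let r := Nat.find exists_ne_top
  have top_before : ∀ k < r, leadingSubgroup N k = ⊤ := fun k hk =>
    not_not.mp (Nat.find_min exists_ne_top hk)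
  have bot_at : leadingSubgroup N r = ⊥ :=
    (leadingSubgroup_normal N r).eq_bot_or_eq_top.resolve_right (Nat.find_spec exists_ne_top)
  have bot_after : ∀ k, r ≤ k → leadingSubgroup N k = ⊥ := fun k hk =>
    le_bot_iff.mp (bot_at ▸ leadingSubgroup_antitone hN hk)
  exact ⟨r, takeHom_injective_of_leadingSubgroup_eq_bot bot_after,
    takeHom_surjective_of_leadingSubgroup_eq_top top_before⟩

end LeadingSubgroup

section Recurrence

variable {Γ : Type*} [Group Γ] {r : ℕ}

/-- The solution of `a (n + r) = ρ (a n, …, a (n + r - 1)) * b n` with trivial initial values. -/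
def recurrenceSolution (ρ : (Fin r → Γ) → Γ) (b : ℕ → Γ) (m : ℕ) : Γ :=
  if r ≤ m then ρ (fun i => recurrenceSolution ρ b (i + (m - r))) * b (m - r) else 1
termination_by m
decreasing_by omega

theorem recurrenceSolution_of_lt (ρ : (Fin r → Γ) → Γ) (b : ℕ → Γ) {m : ℕ} (hm : m < r) :
    recurrenceSolution ρ b m = 1 := by
  rw [recurrenceSolution, if_neg hm.not_ge]

theorem recurrenceSolution_add (ρ : (Fin r → Γ) → Γ) (b : ℕ → Γ) (n : ℕ) :
    recurrenceSolution ρ b (r + n) = ρ (fun i => recurrenceSolution ρ b (i + n)) * b n := by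
  rw [recurrenceSolution, if_pos (Nat.le_add_right r n), Nat.add_sub_cancel_left]

theorem continuous_recurrenceSolution [TopologicalSpace Γ] [ContinuousMul Γ]
    {ρ : (Fin r → Γ) → Γ} (hρ : Continuous ρ) : Continuous (recurrenceSolution ρ) := by
  refine continuous_pi fun m => ?_
  induction m using Nat.strong_induction_on with
  | _ m ih =>
    rcases lt_or_ge m r with hm | hm
    · simp only [recurrenceSolution_of_lt ρ _ hm, continuous_const]
    · obtain ⟨n, rfl⟩ := Nat.exists_eq_add_of_le hm
      simp only [recurrenceSolution_add]
      exact (hρ.comp <| continuous_pi fun i => ih (i + n) (Nat.add_lt_add_right i.2 n)).mul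
        (continuous_apply n)

variable (ρ : (Fin r → Γ) →* Γ) (hρ : ∀ u, ρ u ∈ Subgroup.center Γ)

/-- The failure at index `0` of the recurrence `a (n + r) = ρ (a n, …, a (n + r - 1))`. It is
multiplicative because `ρ` takes central values. -/
def recurrenceDefect : (ℕ → Γ) →* Γ :=
  MonoidHom.mk' (fun a => (ρ (takeHom Γ r a))⁻¹ * a r) fun a b => by
    have ρb_inv_comm := Subgroup.mem_center_iff.mp (inv_mem (hρ (takeHom Γ r b)))
    rw [map_mul, map_mul, mul_inv_rev, Pi.mul_apply, ← ρb_inv_comm]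
    simp only [mul_assoc]
    rw [← mul_assoc (a r), ρb_inv_comm, mul_assoc]

theorem recurrenceDefect_apply (a : ℕ → Γ) :
    recurrenceDefect ρ hρ a = (ρ (takeHom Γ r a))⁻¹ * a r :=
  rfl

theorem continuous_recurrenceDefect [TopologicalSpace Γ] [IsTopologicalGroup Γ]
    (hcont : Continuous ρ) : Continuous (recurrenceDefect ρ hρ) :=
  (hcont.comp (continuous_takeHom r)).inv.mul (continuous_apply r)

theorem slidingBlockCode_recurrenceDefect_recurrenceSolution (b : ℕ → Γ) :
    slidingBlockCode (recurrenceDefect ρ hρ) (recurrenceSolution ρ b) = b := by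
  ext n
  have take_iterate : takeHom Γ r ((shiftHom Γ)^[n] (recurrenceSolution ρ b)) =
      fun i : Fin r => recurrenceSolution ρ b (i + n) :=
    funext fun i => iterate_shiftHom_apply n _ i
  rw [slidingBlockCode_apply, recurrenceDefect_apply, iterate_shiftHom_apply, take_iterate,
    recurrenceSolution_add, inv_mul_cancel_left]

theorem eq_one_of_mem_ker_slidingBlockCode_recurrenceDefect {a : ℕ → Γ}
    (ha : a ∈ (slidingBlockCode (recurrenceDefect ρ hρ)).ker) (ha_one : takeHom Γ r a = 1) :
    a = 1 := by
  ext m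
  induction m using Nat.strong_induction_on with
  | _ m ih =>
    rcases lt_or_ge m r with hm | hm
    · exact takeHom_eq_one_iff.mp ha_one m hm
    · obtain ⟨n, rfl⟩ := Nat.exists_eq_add_of_le hm
      have window_eq_one : takeHom Γ r ((shiftHom Γ)^[n] a) = 1 := funext fun i =>
        (iterate_shiftHom_apply n a i).trans (ih (i + n) (Nat.add_lt_add_right i.2 n))
      have defect_eq_one : recurrenceDefect ρ hρ ((shiftHom Γ)^[n] a) = 1 := congrFun ha n
      rwa [recurrenceDefect_apply, window_eq_one, map_one, inv_one, one_mul,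
        iterate_shiftHom_apply] at defect_eq_one

end Recurrence

section NextEntry

variable {Γ : Type*} [Group Γ] {N : Subgroup (ℕ → Γ)} {r : ℕ}
  (hbij : Bijective ((takeHom Γ r).domRestrict N))

/-- The recurrence rule of a subgroup whose elements are freely determined by their first `r`
entries: it sends `u` to the `r`-th entry of the element of `N` that starts with `u`. -/
noncomputable def nextEntryHom : (Fin r → Γ) →* Γ :=
  (Pi.evalMonoidHom _ r).comp (N.subtype.comp (MulEquiv.ofBijective _ hbij).symm.toMonoidHom)

theorem nextEntryHom_takeHom {a : ℕ → Γ} (ha : a ∈ N) : nextEntryHom hbij (takeHom Γ r a) = a r :=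
  congrArg (fun b : N => (b : ℕ → Γ) r)
    ((MulEquiv.ofBijective _ hbij).symm_apply_apply (⟨a, ha⟩ : N))

theorem nextEntryHom_mem_center [N.Normal] (u : Fin r → Γ) :
    nextEntryHom hbij u ∈ Subgroup.center Γ :=
  apply_mem_center_of_takeHom_injective hbij.1 le_rfl (Subtype.prop _)

theorem ker_slidingBlockCode_recurrenceDefect_nextEntryHom [N.Normal]
    (hN : MapsTo (shiftHom Γ) N N) :
    (slidingBlockCode
      (recurrenceDefect (nextEntryHom hbij) (nextEntryHom_mem_center hbij))).ker = N := by
  have le_ker := le_ker_slidingBlockCode hN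
    (f := recurrenceDefect (nextEntryHom hbij) (nextEntryHom_mem_center hbij)) fun a ha => by
      rw [MonoidHom.mem_ker, recurrenceDefect_apply, nextEntryHom_takeHom hbij ha, inv_mul_cancel]
  refine le_antisymm (fun a ha => ?_) le_ker
  obtain ⟨b, hb⟩ := hbij.2 (takeHom Γ r a)
  have take_eq_one : takeHom Γ r ((b : ℕ → Γ)⁻¹ * a) = 1 := by
    rw [map_mul, map_inv, ← hb]
    exact inv_mul_cancel _
  have b_inv_mul_a := eq_one_of_mem_ker_slidingBlockCode_recurrenceDefect _ _
    (mul_mem (inv_mem (le_ker b.2)) ha) take_eq_one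
  exact inv_mul_eq_one.mp b_inv_mul_a ▸ b.2

end NextEntry

theorem proper_normal_subgroup_of_simple_full_shift_general
    {Γ : Type*} [Group Γ] [IsSimpleGroup Γ] [TopologicalSpace Γ] [DiscreteTopology Γ]
    (N : Subgroup (ℕ → Γ)) [N.Normal]
    (hNproper : N ≠ ⊤) (hNclosed : IsClosed (N : Set (ℕ → Γ)))
    (hNstable : ∀ g ∈ N, shiftHom Γ g ∈ N) :
    (∃ r, Bijective ((takeHom Γ r).domRestrict N)) ∧
    ∃ σbar : (ℕ → Γ) ⧸ N →* (ℕ → Γ) ⧸ N,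
      (∀ g : ℕ → Γ, σbar ((g : (ℕ → Γ) ⧸ N)) = ((shiftHom Γ g : ℕ → Γ) : (ℕ → Γ) ⧸ N)) ∧
      ∃ e : ((ℕ → Γ) ⧸ N) ≃* (ℕ → Γ),
        Continuous e ∧ Continuous e.symm ∧
        ∀ q : (ℕ → Γ) ⧸ N, e (σbar q) = shiftHom Γ (e q) := by
  obtain ⟨r, hbij⟩ := exists_takeHom_bijective hNproper hNclosed hNstable
  have le_comap : N ≤ N.comap (shiftHom Γ) := hNstable
  refine ⟨⟨r, hbij⟩, QuotientGroup.map N N (shiftHom Γ) le_comap, fun _ => rfl, ?_⟩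
  let ρ := nextEntryHom hbij
  let φ := slidingBlockCode (recurrenceDefect ρ (nextEntryHom_mem_center hbij))
  have ker_eq : φ.ker = N := ker_slidingBlockCode_recurrenceDefect_nextEntryHom hbij hNstable
  have continuous_ρ : Continuous ρ := continuous_of_discreteTopology
  have continuous_φ : Continuous φ :=
    continuous_slidingBlockCode (continuous_recurrenceDefect _ _ continuous_ρ)
  obtain ⟨e, continuous_e, continuous_e_symm, e_mk⟩ :=
    exists_quotient_mulEquiv_of_continuous_rightInverse ker_eq continuous_φ
      (continuous_recurrenceSolution continuous_ρ)
      (slidingBlockCode_recurrenceDefect_recurrenceSolution _ _)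
  refine ⟨e, continuous_e, continuous_e_symm, fun q => ?_⟩
  induction q using QuotientGroup.induction_on with
  | H g => rw [QuotientGroup.map_mk, e_mk, e_mk, slidingBlockCode_shiftHom]

/-- Let `Γ` be a finite simple group and `G = Γ^ℕ` the full one-sided
group shift on `Γ`. If `N` is a proper closed shift-stable normal subgroup of `G`, then
`N` is finite, and the quotient `G/N` (with the quotient topology and the induced
endomorphism) is isomorphic, as an expansive profinite group, to `Γ^ℕ`. -/
theorem proper_normal_subgroup_of_simple_full_shift
    {Γ : Type*} [Group Γ] [Finite Γ] [IsSimpleGroup Γ]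
    [TopologicalSpace Γ] [DiscreteTopology Γ]
    (N : Subgroup (ℕ → Γ)) [hNnormal : N.Normal]
    (hNproper : N ≠ ⊤) (hNclosed : IsClosed (N : Set (ℕ → Γ)))
    (hNstable : ∀ g ∈ N, shiftHom Γ g ∈ N) :
    (N : Set (ℕ → Γ)).Finite ∧
    ∃ σbar : (ℕ → Γ) ⧸ N →* (ℕ → Γ) ⧸ N,
      (∀ g : ℕ → Γ, σbar ((g : (ℕ → Γ) ⧸ N)) = ((shiftHom Γ g : ℕ → Γ) : (ℕ → Γ) ⧸ N)) ∧
      ∃ e : ((ℕ → Γ) ⧸ N) ≃* (ℕ → Γ),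
        Continuous e ∧ Continuous e.symm ∧
        ∀ q : (ℕ → Γ) ⧸ N, e (σbar q) = shiftHom Γ (e q) := by
  obtain ⟨⟨r, hbij⟩, hquot⟩ :=
    proper_normal_subgroup_of_simple_full_shift_general N hNproper hNclosed hNstable
  exact ⟨Finite.of_injective _ hbij.1, hquot⟩
end

section
/- Let L/K be a Galois extension of fields (normal and separable, possibly infinite), let σ : L → L be a ring endomorphism with σ(K) ⊆ K, and let G = Gal(L/K) be the Galois group with the Krull topology. Then: (i) for every g ∈ G there exists a unique element g^σ ∈ G with σ ∘ g^σ = g ∘ σ as maps L → L; (ii) the map G → G, g ↦ g^σ, is a continuous group homomorphism; (iii) this endomorphism is expansive — i.e., there exists an open subgroup U of G with ⋂_{n∈ℕ} (g ↦ g^σ)⁻ⁿ(U) = {1} — if and only if L/K is finitely σ-generated, i.e., L = K(⋃_{n∈ℕ} σⁿ(A)) for some finite subset A ⊆ L. -/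
open Function Set

/-!
For `S ⊆ L` let `Fix(S) ≤ Gal(L/K)` be its pointwise stabilizer. Each `g ∈ Gal(L/K)` fixes
`σ(K) ⊆ K`, so it preserves `σ(L)`, which is normal over `σ(K)`, and pulls back along `σ` to a
unique `g^σ`. As `σ` is injective, `g^σ` fixes `x` exactly when `g` fixes `σ x`: the preimage of
`Fix(S)` under `g ↦ g^σ` is `Fix(σ(S))`. The subgroups `Fix(A)` with `A` finite form a basis of
open neighbourhoods of `1`, whence continuity, and the preimages of `Fix(A)` under all the iterates
intersect in `Fix(⋃ₙ σⁿ(A))`, which by infinite Galois theory is trivial exactly when `⋃ₙ σⁿ(A)`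
generates `L`.
-/

lemma exists_ringHom_comp_eq {A B C : Type*} [NonAssocSemiring A] [NonAssocSemiring B]
    [NonAssocSemiring C] {f : A →+* C} {i : B →+* C} (hi : Injective i)
    (hf : ∀ x, ∃ y, f x = i y) :
    ∃ φ : A →+* B, i.comp φ = f := by
  choose φ hφ using hf
  exact ⟨{ toFun := φ
           map_one' := hi (by rw [← hφ, map_one, map_one])
           map_mul' := fun x y ↦ hi (by rw [← hφ, map_mul, map_mul, hφ, hφ])
           map_zero' := hi (by rw [← hφ, map_zero, map_zero])
           map_add' := fun x y ↦ hi (by rw [← hφ, map_add, map_add, hφ, hφ]) },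
    RingHom.ext fun x ↦ (hφ x).symm⟩

section PointwiseStabilizers

variable {K L : Type*} [Field K] [Field L] [Algebra K L]

lemma fixingSubgroup_adjoin (S : Set L) :
    (IntermediateField.adjoin K S).fixingSubgroup = fixingSubgroup Gal(L/K) S := by
  refine eq_of_forall_le_iff fun H ↦ ?_
  rw [← IntermediateField.le_iff_le, IntermediateField.adjoin_le_iff]
  exact (fixingSubgroup_fixedPoints_gc Gal(L/K) L).le_iff_le.symm

lemma isOpen_fixingSubgroup_of_finite {S : Set L} (hS : S.Finite)
    (hint : ∀ x ∈ S, IsIntegral K x) : IsOpen (fixingSubgroup Gal(L/K) S : Set Gal(L/K)) := by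
  have := hS.to_subtype
  have := IntermediateField.finiteDimensional_adjoin hint
  rw [← fixingSubgroup_adjoin]
  exact IntermediateField.fixingSubgroup_isOpen _

lemma exists_finset_fixingSubgroup_subset {V : Set Gal(L/K)} (hV : V ∈ nhds 1) :
    ∃ S : Finset L, (fixingSubgroup Gal(L/K) (S : Set L) : Set Gal(L/K)) ⊆ V := by
  obtain ⟨E, _, hEV⟩ := (krullTopology_mem_nhds_one_iff K L V).1 hV
  obtain ⟨S, rfl⟩ := IntermediateField.essFiniteType_iff.1
    (inferInstance : Algebra.EssFiniteType K E)
  rw [fixingSubgroup_adjoin] at hEV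
  exact ⟨S, hEV⟩

lemma fixingSubgroup_eq_bot_iff_adjoin_eq_top [IsGalois K L] {S : Set L} :
    fixingSubgroup Gal(L/K) S = ⊥ ↔ IntermediateField.adjoin K S = ⊤ := by
  rw [← fixingSubgroup_adjoin]
  refine ⟨fun h ↦ ?_, fun h ↦ by rw [h, IntermediateField.fixingSubgroup_top]⟩
  rw [← InfiniteGalois.fixedField_fixingSubgroup (IntermediateField.adjoin K S), h,
    IntermediateField.fixedField_bot]

end PointwiseStabilizers

section GaloisPullback

variable {K L F M : Type*} [Field K] [Field L] [Field F] [Field M] [Algebra K L] [Algebra F M]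
  [Normal K L]

/-- The homomorphism `Gal(M/F) → Gal(L/K)`, `g ↦ g^σ`, induced by a morphism of field extensions
from `L/K` to `M/F` with `L/K` normal, that is, by embeddings `φ : K → F` and `σ : L → M` which
agree on `K`. The element `g^σ` is the restriction of `g` to `L`, embedded in `M` by `σ`. -/
noncomputable def galoisPullback (σ : L →+* M) (φ : K →+* F)
    (hφ : (algebraMap F M).comp φ = σ.comp (algebraMap K L)) : Gal(M/F) →* Gal(L/K) :=
  letI := φ.toAlgebra
  letI := σ.toAlgebra
  letI := (σ.comp (algebraMap K L)).toAlgebra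
  haveI : IsScalarTower K F M := .of_algebraMap_eq' hφ.symm
  haveI : IsScalarTower K L M := .of_algebraMap_eq' rfl
  (AlgEquiv.restrictNormalHom L).comp (AlgEquiv.restrictScalarsHom K)

namespace galoisPullback

variable {σ : L →+* M} {φ : K →+* F} (hφ : (algebraMap F M).comp φ = σ.comp (algebraMap K L))

lemma map_apply (g : Gal(M/F)) (x : L) : σ (galoisPullback σ φ hφ g x) = g (σ x) :=
  letI := φ.toAlgebra
  letI := σ.toAlgebra
  letI := (σ.comp (algebraMap K L)).toAlgebra
  haveI : IsScalarTower K F M := .of_algebraMap_eq' hφ.symm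
  haveI : IsScalarTower K L M := .of_algebraMap_eq' rfl
  (g.restrictScalars K).restrictNormal_commutes L x

lemma eq_of_forall_map_apply {g : Gal(M/F)} {h : Gal(L/K)} (hh : ∀ x, σ (h x) = g (σ x)) :
    h = galoisPullback σ φ hφ g :=
  AlgEquiv.ext fun x ↦ σ.injective ((hh x).trans (map_apply hφ g x).symm)

lemma apply_eq_self_iff (g : Gal(M/F)) (x : L) :
    galoisPullback σ φ hφ g x = x ↔ g (σ x) = σ x := by
  rw [← map_apply hφ, σ.injective.eq_iff]

lemma comap_fixingSubgroup (S : Set L) :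
    (fixingSubgroup Gal(L/K) S).comap (galoisPullback σ φ hφ) =
      fixingSubgroup Gal(M/F) (σ '' S) := by
  ext g
  simp only [Subgroup.mem_comap, mem_fixingSubgroup_iff, AlgEquiv.smul_def, forall_mem_image,
    apply_eq_self_iff]

protected lemma continuous : Continuous (galoisPullback σ φ hφ) := by
  refine continuous_of_continuousAt_one _ fun V hV ↦ ?_
  rw [map_one] at hV
  obtain ⟨S, hSV⟩ := exists_finset_fixingSubgroup_subset hV
  have isIntegral_image : ∀ y ∈ σ '' S, IsIntegral F y := by
    rintro _ ⟨x, -, rfl⟩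
    exact (Algebra.IsIntegral.isIntegral (R := K) x).map_of_comp_eq φ σ hφ
  have isOpen_fix_image := isOpen_fixingSubgroup_of_finite (S.finite_toSet.image σ) isIntegral_image
  rw [← comap_fixingSubgroup hφ] at isOpen_fix_image
  exact Filter.mem_map.2 <|
    Filter.mem_of_superset (isOpen_fix_image.mem_nhds (one_mem _)) (preimage_mono hSV)

end galoisPullback

end GaloisPullback

/-- An endomorphism `τ` of a topological group `G` is expansive if the preimages of some open
subgroup under the iterates of `τ` intersect trivially. -/
def IsExpansive {G : Type*} [Group G] [TopologicalSpace G] (τ : G →* G) : Prop :=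
  ∃ U : Subgroup G, IsOpen (U : Set G) ∧ ⋂ n : ℕ, τ^[n] ⁻¹' (U : Set G) = {1}

/-- The extension `L/K` is finitely `σ`-generated if the `σ`-orbits of finitely many elements
of `L` generate `L` as a field over `K`. -/
def IsFinitelySigmaGenerated (K : Type*) {L : Type*} [Field K] [Field L] [Algebra K L]
    (σ : L →+* L) : Prop :=
  ∃ A : Finset L, IntermediateField.adjoin K (⋃ n : ℕ, σ^[n] '' (A : Set L)) = ⊤

namespace galoisPullback

variable {K L : Type*} [Field K] [Field L] [Algebra K L] {σ : L →+* L} {φ : K →+* K}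
  (hφ : (algebraMap K L).comp φ = σ.comp (algebraMap K L))

lemma preimage_iterate_fixingSubgroup [Normal K L] (n : ℕ) (S : Set L) :
    (galoisPullback σ φ hφ)^[n] ⁻¹' fixingSubgroup Gal(L/K) S =
      fixingSubgroup Gal(L/K) (σ^[n] '' S) := by
  induction n generalizing S with
  | zero => simp only [iterate_zero, preimage_id, image_id]
  | succ n ih =>
    rw [iterate_succ', preimage_comp, ← Subgroup.coe_comap, comap_fixingSubgroup, ih,
      iterate_succ, image_comp]

lemma iInter_preimage_iterate_fixingSubgroup [Normal K L] (S : Set L) :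
    ⋂ n : ℕ, (galoisPullback σ φ hφ)^[n] ⁻¹' fixingSubgroup Gal(L/K) S =
      fixingSubgroup Gal(L/K) (⋃ n : ℕ, σ^[n] '' S) := by
  simp only [preimage_iterate_fixingSubgroup, fixingSubgroup_iUnion, Subgroup.coe_iInf]

lemma iInter_preimage_iterate_fixingSubgroup_eq_singleton_one_iff [IsGalois K L] (S : Set L) :
    ⋂ n : ℕ, (galoisPullback σ φ hφ)^[n] ⁻¹' fixingSubgroup Gal(L/K) S = {1} ↔
      IntermediateField.adjoin K (⋃ n : ℕ, σ^[n] '' S) = ⊤ := by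
  rw [iInter_preimage_iterate_fixingSubgroup, ← Subgroup.coe_bot, SetLike.coe_set_eq,
    fixingSubgroup_eq_bot_iff_adjoin_eq_top]

theorem isExpansive_iff [IsGalois K L] :
    IsExpansive (galoisPullback σ φ hφ) ↔ IsFinitelySigmaGenerated K σ := by
  constructor
  · rintro ⟨U, isOpen_U, iInter_U⟩
    obtain ⟨A, hAU⟩ := exists_finset_fixingSubgroup_subset (isOpen_U.mem_nhds (one_mem U))
    refine ⟨A, (iInter_preimage_iterate_fixingSubgroup_eq_singleton_one_iff hφ A).1 ?_⟩
    refine (iInter_mono fun n ↦ preimage_mono hAU).trans iInter_U.subset |>.antisymm ?_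
    rw [iInter_preimage_iterate_fixingSubgroup, singleton_subset_iff]
    exact one_mem _
  · rintro ⟨A, adjoin_A⟩
    exact ⟨fixingSubgroup Gal(L/K) (A : Set L),
      isOpen_fixingSubgroup_of_finite A.finite_toSet fun x _ ↦ Algebra.IsIntegral.isIntegral x,
      (iInter_preimage_iterate_fixingSubgroup_eq_singleton_one_iff hφ A).2 adjoin_A⟩

end galoisPullback

/-- Let `L/K` be a (possibly infinite) Galois extension of fields, and
let `σ : L → L` be a ring endomorphism with `σ(K) ⊆ K`. Let `G = Gal(L/K)` be the Galois
group with the Krull topology. Then: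
(i) for every `g ∈ G` there is a unique `g^σ ∈ G` with `σ ∘ g^σ = g ∘ σ`;
(ii) the map `g ↦ g^σ` is a continuous group homomorphism `G → G`;
(iii) this endomorphism is expansive — there is an open subgroup `U ≤ G` with
`⋂ₙ (g ↦ g^σ)⁻ⁿ(U) = {1}` — if and only if `L/K` is finitely σ-generated, i.e.
`L = K(⋃ₙ σⁿ(A))` for some finite `A ⊆ L`. -/
theorem galois_group_sigma_endomorphism
    {K L : Type*} [Field K] [Field L] [Algebra K L] [IsGalois K L]
    (σ : L →+* L)
    (hσK : ∀ x : K, ∃ y : K, σ (algebraMap K L x) = algebraMap K L y) :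
    (∀ g : L ≃ₐ[K] L, ∃! h : L ≃ₐ[K] L, ∀ x : L, σ (h x) = g (σ x)) ∧
    ∃ τ : (L ≃ₐ[K] L) → (L ≃ₐ[K] L),
      (∀ g : L ≃ₐ[K] L, ∀ x : L, σ (τ g x) = g (σ x)) ∧
      Continuous τ ∧
      (∀ a b : L ≃ₐ[K] L, τ (a * b) = τ a * τ b) ∧
      ((∃ U : Subgroup (L ≃ₐ[K] L), IsOpen (U : Set (L ≃ₐ[K] L)) ∧
          (⋂ n : ℕ, τ^[n] ⁻¹' (U : Set (L ≃ₐ[K] L))) = ({1} : Set (L ≃ₐ[K] L))) ↔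
        ∃ A : Finset L,
          IntermediateField.adjoin K (⋃ n : ℕ, (⇑σ)^[n] '' (A : Set L)) = ⊤) := by
  obtain ⟨φ, hφ⟩ := exists_ringHom_comp_eq (f := σ.comp (algebraMap K L))
    (algebraMap K L).injective hσK
  refine ⟨fun g ↦ ⟨galoisPullback σ φ hφ g, galoisPullback.map_apply hφ g,
    fun _ ↦ galoisPullback.eq_of_forall_map_apply hφ⟩, ?_⟩
  exact ⟨galoisPullback σ φ hφ, galoisPullback.map_apply hφ, galoisPullback.continuous hφ,
    map_mul _, galoisPullback.isExpansive_iff hφ⟩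
end
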